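/- arXiv:2203.09274 — 3 statements merged into one kernel-verified Lean document; each statement's English description precedes it below -/
import Mathlib

section
/- Let f ∈ 𝒮(ℝ) be a Schwartz function and k, m, n ∈ ℤ with n ≠ 0. Then the series F(t,x,y,z) = Σ_{ξ∈ℤ} f(x+ξ)·e^{2πi(kt + (m+nξ)y + nz)} converges absolutely at every point of ℝ⁴ and defines a smooth KT-periodic function; moreover ∫_{[0,1]⁴} |F(t,x,y,z)|² dt dx dy dz = ∫_ℝ |f(x)|² dx. -/
/-!
Up to a unimodular character, the Weil–Brezin series is the Zak transform
`Z f (x, y) = ∑_ξ e^{2πiξy} f(x + ξ)` evaluated at `(x, n y)`. Writing `X f` for `x ↦ x f(x)`, one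
has `∂ₓ Z f = Z f'` and `∂_y Z f = 2πi (Z (X f) - x Z f)`, because
`ξ f(x + ξ) = (X f)(x + ξ) - x f(x + ξ)`. As `f'` and `X f` are again Schwartz functions, `Z f` is
smooth. Reindexing `ξ ↦ ξ + 1` gives `Z f (x + 1, y) = e^{-2πiy} Z f (x, y)`, and the shear
`z ↦ z + y` of the Heisenberg lattice cancels exactly this factor. For the norm, Parseval in `y`
turns `|Z f (x, n y)|²` into `∑_ξ |f(x + ξ)|²`, as the frequencies `n ξ` are distinct, and
integrating this over `0 ≤ x ≤ 1` unfolds to the integral over `ℝ`.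
-/

open Complex MeasureTheory

noncomputable section

/-- Functions of four real variables `(t, x, y, z)` with complex values. -/
abbrev F4 : Type := ℝ → ℝ → ℝ → ℝ → ℂ

/-- Smoothness of a function of four real variables. -/
def Smooth4 (f : F4) : Prop :=
  ContDiff ℝ (⊤ : ℕ∞) (fun p : ℝ × ℝ × ℝ × ℝ => f p.1 p.2.1 p.2.2.1 p.2.2.2)

/-- The invariance properties identifying smooth functions on `ℝ⁴` with smooth
functions on the Kodaira–Thurston manifold `KT⁴`. -/
def KTPeriodic (f : F4) : Prop :=
  ∀ t x y z : ℝ,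
    f (t + 1) x y z = f t x y z ∧
    f t (x + 1) y (z + y) = f t x y z ∧
    f t x (y + 1) z = f t x y z ∧
    f t x y (z + 1) = f t x y z

/-- Partial derivative in `t`. -/
def pT (f : F4) (t x y z : ℝ) : ℂ := deriv (fun s => f s x y z) t
/-- Partial derivative in `x`. -/
def pX (f : F4) (t x y z : ℝ) : ℂ := deriv (fun s => f t s y z) x
/-- Partial derivative in `y`. -/
def pY (f : F4) (t x y z : ℝ) : ℂ := deriv (fun s => f t x s z) y
/-- Partial derivative in `z`. -/
def pZ (f : F4) (t x y z : ℝ) : ℂ := deriv (fun s => f t x y s) z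

/-- The vector field `V₁ = (1/2)(∂/∂t − i ∂/∂x)`. -/
def V₁ (f : F4) (t x y z : ℝ) : ℂ :=
  (1 / 2) * (pT f t x y z - Complex.I * pX f t x y z)

/-- The conjugate vector field `V̄₁ = (1/2)(∂/∂t + i ∂/∂x)`. -/
def V₁c (f : F4) (t x y z : ℝ) : ℂ :=
  (1 / 2) * (pT f t x y z + Complex.I * pX f t x y z)

/-- The vector field `V₂ = (1/2)(∂/∂y + x ∂/∂z − ((a−i)/b) ∂/∂z)`. -/
def V₂ (a b : ℝ) (f : F4) (t x y z : ℝ) : ℂ :=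
  (1 / 2) * (pY f t x y z + (x : ℂ) * pZ f t x y z -
    (((a : ℂ) - Complex.I) / (b : ℂ)) * pZ f t x y z)

/-- The conjugate vector field `V̄₂ = (1/2)(∂/∂y + x ∂/∂z − ((a+i)/b) ∂/∂z)`. -/
def V₂c (a b : ℝ) (f : F4) (t x y z : ℝ) : ℂ :=
  (1 / 2) * (pY f t x y z + (x : ℂ) * pZ f t x y z -
    (((a : ℂ) + Complex.I) / (b : ℂ)) * pZ f t x y z)

/-- The space `𝒮(a,b)` of pairs `(f,g)` of smooth KT-periodic functions satisfying
`−V̄₂(f) + V̄₁(g) + (b/4)g = 0` and `V₁(f) + V₂(g) = 0`. -/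
def Sol (a b : ℝ) : Set (F4 × F4) :=
  {fg | Smooth4 fg.1 ∧ Smooth4 fg.2 ∧ KTPeriodic fg.1 ∧ KTPeriodic fg.2 ∧
    (∀ t x y z : ℝ,
      -V₂c a b fg.1 t x y z + V₁c fg.2 t x y z + ((b : ℂ) / 4) * fg.2 t x y z = 0) ∧
    (∀ t x y z : ℝ, V₁ fg.1 t x y z + V₂ a b fg.2 t x y z = 0)}

/-- `S` is a `ℂ`-subspace of dimension exactly `n`: there are `n` linearly independent
elements whose span is exactly `S`. -/
def HasDimOver {V : Type*} [AddCommGroup V] [Module ℂ V] (S : Set V) (n : ℕ) : Prop :=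
  ∃ v : Fin n → V, LinearIndependent ℂ v ∧
    (Submodule.span ℂ (Set.range v) : Set V) = S

end

open MeasureTheory

section Preliminaries

open scoped FourierTransform

lemma fourierChar_intCast_mul (j : ℤ) (y : ℝ) :
    (𝐞 (j * y) : ℂ) = fourier j (y : UnitAddCircle) := by
  rw [Real.fourierChar_apply, fourier_coe_apply]
  push_cast
  ring_nf

lemma fourierChar_intCast (j : ℤ) : 𝐞 (j : ℝ) = 1 := by
  refine Circle.ext ?_
  rw [← mul_one (j : ℝ), fourierChar_intCast_mul, AddCircle.coe_period, fourier_eval_zero,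
    Circle.coe_one]

lemma contDiff_fourierChar {n : WithTop ℕ∞} : ContDiff ℝ n fun x : ℝ => (𝐞 x : ℂ) := by
  simp only [Real.fourierChar_apply]
  exact ((Complex.ofRealCLM.contDiff.comp (contDiff_const.mul contDiff_id)).mul
    contDiff_const).cexp

theorem integral_tsum_comp_add_int {E : Type*} [NormedAddCommGroup E] [NormedSpace ℝ E]
    {g : ℝ → E} (hg : Integrable g) :
    ∫ x in (0 : ℝ)..1, ∑' ξ : ℤ, g (x + ξ) = ∫ x, g x := by
  have hsummable : Summable fun ξ : ℤ => ∫ x in Set.Ioc (0 : ℝ) 1, ‖g (x + ξ)‖ := by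
    simpa only [intervalIntegral.integral_of_le zero_le_one] using
      hg.norm.hasSum_intervalIntegral_comp_add_int.summable
  rw [← hg.hasSum_intervalIntegral_comp_add_int.tsum_eq]
  simp only [intervalIntegral.integral_of_le zero_le_one]
  exact (integral_tsum_of_summable_integral_norm
    (fun ξ : ℤ => (hg.comp_add_right (ξ : ℝ)).integrableOn) hsummable).symm

theorem hasSum_norm_sq_of_orthonormal {𝕜 H ι : Type*} [RCLike 𝕜] [NormedAddCommGroup H]
    [InnerProductSpace 𝕜 H] {v : ι → H} (hv : Orthonormal 𝕜 v) {a : ι → 𝕜} {s : H}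
    (hs : HasSum (fun i => a i • v i) s) : HasSum (fun i => ‖a i‖ ^ 2) (‖s‖ ^ 2) := by
  refine (hs.norm.pow 2).congr fun t => ?_
  simpa using hv.orthogonalFamily.norm_sum a t

lemma norm_toLp_sq {𝕜 X : Type*} [RCLike 𝕜] [TopologicalSpace X] [CompactSpace X]
    [MeasurableSpace X] [BorelSpace X] {μ : Measure X} [IsFiniteMeasure μ] (g : C(X, 𝕜)) :
    ‖ContinuousMap.toLp 2 μ 𝕜 g‖ ^ 2 = ∫ x, ‖g x‖ ^ 2 ∂μ := by
  apply RCLike.ofReal_injective (K := 𝕜)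
  rw [RCLike.ofReal_pow, ← inner_self_eq_norm_sq_to_K, ContinuousMap.inner_toLp, ← integral_ofReal]
  simp only [RCLike.mul_conj, RCLike.ofReal_pow]

theorem integral_norm_sq_tsum_fourier {T : ℝ} [Fact (0 < T)] {ι : Type*} {ν : ι → ℤ}
    (hν : Function.Injective ν) {a : ι → ℂ} (ha : Summable a) :
    ∫ y : AddCircle T, ‖∑' i, a i * fourier (ν i) y‖ ^ 2 ∂AddCircle.haarAddCircle =
      ∑' i, ‖a i‖ ^ 2 := by
  have hsummable : Summable fun i => a i • fourier (T := T) (ν i) :=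
    .of_norm <| by simpa only [norm_smul, fourier_norm, mul_one] using ha.norm
  have happly (y : AddCircle T) :
      (∑' i, a i • fourier (ν i)) y = ∑' i, a i * fourier (ν i) y :=
    (ContinuousMap.tsum_apply hsummable y).symm
  have hL2 := hsummable.hasSum.mapL (ContinuousMap.toLp 2 AddCircle.haarAddCircle ℂ)
  simp only [map_smul] at hL2
  rw [(hasSum_norm_sq_of_orthonormal (orthonormal_fourier.comp ν hν) hL2).tsum_eq,
    norm_toLp_sq]
  simp only [happly]

end Preliminaries

section OfPartials

open ContinuousLinearMap (fst snd)

variable {E : Type*} [NormedAddCommGroup E] [NormedSpace ℝ E]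

/-- The derivative `v ↦ v.1 • a + v.2 • b` of a function on the plane whose partial derivatives are
`a` and `b`, packaged as continuous linear in `(a, b)` so that it commutes with infinite sums. -/
noncomputable def ofPartials : E × E →L[ℝ] ℝ × ℝ →L[ℝ] E :=
  (ContinuousLinearMap.smulRightL ℝ (ℝ × ℝ) E (fst ℝ ℝ ℝ)).coprod
    (ContinuousLinearMap.smulRightL ℝ (ℝ × ℝ) E (snd ℝ ℝ ℝ))

@[simp]
lemma ofPartials_apply (a b : E) (v : ℝ × ℝ) :
    ofPartials (a, b) v = v.1 • a + v.2 • b := rfl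

lemma norm_ofPartials_le (a b : E) : ‖ofPartials (a, b)‖ ≤ ‖a‖ + ‖b‖ := by
  refine ContinuousLinearMap.opNorm_le_bound _ (by positivity) fun v => ?_
  calc ‖v.1 • a + v.2 • b‖ ≤ ‖v.1‖ * ‖a‖ + ‖v.2‖ * ‖b‖ := by
        simpa only [norm_smul] using norm_add_le (v.1 • a) (v.2 • b)
    _ ≤ ‖v‖ * ‖a‖ + ‖v‖ * ‖b‖ := by
        gcongr
        exacts [norm_fst_le v, norm_snd_le v]
    _ = (‖a‖ + ‖b‖) * ‖v‖ := by ring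

end OfPartials

section Zak

open scoped FourierTransform SchwartzMap

variable {E : Type*} [NormedAddCommGroup E]

theorem exists_summable_norm_comp_add_int_le [NormedSpace ℝ E] (f : 𝓢(ℝ, E)) {K : Set ℝ}
    (hK : IsCompact K) :
    ∃ u : ℤ → ℝ, Summable u ∧ ∀ ξ : ℤ, ∀ x ∈ K, ‖f (x + ξ)‖ ≤ u ξ := by
  let K₀ : TopologicalSpace.Compacts ℝ := ⟨K, hK⟩
  let g : C(ℝ, E) := ⟨f, f.continuous⟩
  let translate (ξ : ℤ) : C(K₀, E) := (g.comp (ContinuousMap.addRight (ξ : ℝ))).restrict K₀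
  have hdecay :
      (fun ξ : ℤ => ‖translate ξ‖) =O[Filter.cofinite] fun ξ : ℤ => |(ξ : ℝ)| ^ (-2 : ℝ) :=
    (isBigO_norm_restrict_cocompact g two_pos (f.isBigO_cocompact_rpow (-2)) K₀).comp_tendsto
      Int.tendsto_coe_cofinite
  exact ⟨fun ξ => ‖translate ξ‖, summable_of_isBigO (Real.summable_abs_int_rpow one_lt_two) hdecay,
    fun ξ x hx => (translate ξ).norm_coe_le_norm ⟨x, hx⟩⟩

lemma summable_norm_comp_add_int [NormedSpace ℝ E] (f : 𝓢(ℝ, E)) (x : ℝ) :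
    Summable fun ξ : ℤ => ‖f (x + ξ)‖ :=
  have ⟨_, hu, hle⟩ := exists_summable_norm_comp_add_int_le f (isCompact_singleton (x := x))
  hu.of_nonneg_of_le (fun _ => norm_nonneg _) fun ξ => hle ξ x rfl

/-- The position operator `f ↦ (x ↦ x • f x)` on Schwartz functions. Together with `d/dx` it
describes the derivative of the Zak transform. -/
noncomputable def positionCLM [NormedSpace ℝ E] : 𝓢(ℝ, E) →L[ℝ] 𝓢(ℝ, E) :=
  SchwartzMap.smulLeftCLM E fun x : ℝ => x

@[simp]
lemma positionCLM_apply [NormedSpace ℝ E] (f : 𝓢(ℝ, E)) (x : ℝ) : positionCLM f x = x • f x :=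
  SchwartzMap.smulLeftCLM_apply_apply (by fun_prop) f x

variable [NormedSpace ℂ E]

/-- The summand with index `ξ` of the Zak transform `zak f`. -/
noncomputable def zakTerm (f : 𝓢(ℝ, E)) (ξ : ℤ) (p : ℝ × ℝ) : E :=
  𝐞 (ξ * p.2) • f (p.1 + ξ)

/-- The Zak transform `(x, y) ↦ ∑_ξ e^{2πiξy} f(x + ξ)`. It carries no frequency parameter: up to a
unimodular factor, the Weil–Brezin map with parameters `(k, m, n)` is its pullback along
`(x, y) ↦ (x, n * y)`. -/
noncomputable def zak (f : 𝓢(ℝ, E)) (p : ℝ × ℝ) : E :=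
  ∑' ξ : ℤ, zakTerm f ξ p

@[simp]
lemma norm_zakTerm (f : 𝓢(ℝ, E)) (ξ : ℤ) (p : ℝ × ℝ) : ‖zakTerm f ξ p‖ = ‖f (p.1 + ξ)‖ :=
  Circle.norm_smul _ _

lemma zak_add_one_left (f : 𝓢(ℝ, E)) (x y : ℝ) : zak f (x + 1, y) = 𝐞 (-y) • zak f (x, y) := by
  rw [zak, zak, ← tsum_const_smul', ← (Equiv.addRight (1 : ℤ)).tsum_eq fun ξ => 𝐞 (-y) • _]
  refine tsum_congr fun ξ => ?_
  rw [zakTerm, zakTerm, smul_smul, ← AddChar.map_add_eq_mul, Equiv.coe_addRight]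
  push_cast
  ring_nf

lemma zak_add_intCast_right (f : 𝓢(ℝ, E)) (x y : ℝ) (j : ℤ) : zak f (x, y + j) = zak f (x, y) := by
  refine tsum_congr fun ξ => ?_
  rw [zakTerm, zakTerm, mul_add, AddChar.map_add_eq_mul, ← Int.cast_mul, fourierChar_intCast,
    mul_one]

lemma summable_zakTerm [CompleteSpace E] (f : 𝓢(ℝ, E)) (p : ℝ × ℝ) :
    Summable fun ξ => zakTerm f ξ p :=
  .of_norm <| by simpa only [norm_zakTerm] using summable_norm_comp_add_int f p.1

lemma zakTerm_positionCLM_sub (f : 𝓢(ℝ, E)) (ξ : ℤ) (p : ℝ × ℝ) :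
    zakTerm (positionCLM f) ξ p - p.1 • zakTerm f ξ p = (ξ : ℝ) • zakTerm f ξ p := by
  rw [zakTerm, zakTerm, positionCLM_apply, smul_comm p.1, ← smul_sub, ← sub_smul,
    add_sub_cancel_left, smul_comm]

lemma hasFDerivAt_zakTerm (f : 𝓢(ℝ, E)) (ξ : ℤ) (p : ℝ × ℝ) :
    HasFDerivAt (zakTerm f ξ)
      (ofPartials (zakTerm (SchwartzMap.derivCLM ℝ E f) ξ p,
        (2 * Real.pi * Complex.I : ℂ) • (zakTerm (positionCLM f) ξ p - p.1 • zakTerm f ξ p)))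
      p := by
  have hchar := (Real.hasDerivAt_fourierChar (ξ * p.2)).hasFDerivAt.comp p
    ((hasFDerivAt_snd (𝕜 := ℝ) (p := p)).const_mul (ξ : ℝ))
  have hf := (f.hasDerivAt (p.1 + ξ)).hasFDerivAt.comp p
    ((hasFDerivAt_fst (𝕜 := ℝ) (p := p)).add_const (ξ : ℝ))
  rw [zakTerm_positionCLM_sub]
  refine (hchar.smul hf).congr_fderiv ?_
  ext
  · simp [zakTerm, Circle.smul_def]
  · simp [zakTerm, Circle.smul_def, ← Complex.coe_smul, smul_smul, mul_assoc, mul_left_comm]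

theorem hasFDerivAt_zak [CompleteSpace E] (f : 𝓢(ℝ, E)) (p : ℝ × ℝ) :
    HasFDerivAt (zak f)
      (ofPartials (zak (SchwartzMap.derivCLM ℝ E f) p,
        (2 * Real.pi * Complex.I : ℂ) • (zak (positionCLM f) p - p.1 • zak f p))) p := by
  have hK := isCompact_closedBall p.1 1
  obtain ⟨u, hu, hfu⟩ := exists_summable_norm_comp_add_int_le f hK
  obtain ⟨v, hv, hfv⟩ := exists_summable_norm_comp_add_int_le (SchwartzMap.derivCLM ℝ E f) hK
  obtain ⟨w, hw, hfw⟩ := exists_summable_norm_comp_add_int_le (positionCLM f) hK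
  obtain ⟨R, hR⟩ := hK.isBounded.exists_norm_le
  have hbound (ξ : ℤ) (q : ℝ × ℝ) (hq : q ∈ Metric.ball p 1) :
      ‖ofPartials (zakTerm (SchwartzMap.derivCLM ℝ E f) ξ q,
        (2 * Real.pi * Complex.I : ℂ) • (zakTerm (positionCLM f) ξ q - q.1 • zakTerm f ξ q))‖ ≤
        v ξ + ‖(2 * Real.pi * Complex.I : ℂ)‖ * (w ξ + R * u ξ) := by
    have hq₁ : q.1 ∈ Metric.closedBall p.1 1 :=
      (le_max_left _ _).trans (Metric.mem_ball.1 hq).le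
    grw [norm_ofPartials_le, norm_smul, norm_sub_le, norm_smul, norm_zakTerm, norm_zakTerm,
      norm_zakTerm, hfu ξ _ hq₁, hfv ξ _ hq₁, hfw ξ _ hq₁, hR _ hq₁]
    exact (norm_nonneg _).trans (hfu ξ _ hq₁)
  have hsum₁ := (summable_zakTerm (SchwartzMap.derivCLM ℝ E f) p).hasSum
  have hsum₂ := ((summable_zakTerm (positionCLM f) p).hasSum.sub
    ((summable_zakTerm f p).hasSum.const_smul p.1)).const_smul (2 * Real.pi * Complex.I : ℂ)
  have hderiv := hasFDerivAt_tsum_of_isPreconnected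
    (hv.add ((hw.add (hu.mul_left R)).mul_left _)) Metric.isOpen_ball
    (convex_ball p 1).isPreconnected (fun ξ q _ => hasFDerivAt_zakTerm f ξ q) hbound
    (Metric.mem_ball_self one_pos) (summable_zakTerm f p) (Metric.mem_ball_self one_pos)
  exact hderiv.congr_fderiv ((hsum₁.prodMk hsum₂).mapL ofPartials).tsum_eq

theorem contDiff_zak [CompleteSpace E] {n : ℕ∞} (f : 𝓢(ℝ, E)) : ContDiff ℝ n (zak f) := by
  suffices h : ∀ (N : ℕ) (f : 𝓢(ℝ, E)), ContDiff ℝ N (zak f) from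
    (contDiff_infty.2 fun N => h N f).of_le (mod_cast le_top)
  intro N
  induction N with
  | zero => exact fun f => contDiff_zero.2 <| continuous_iff_continuousAt.2 fun p =>
      (hasFDerivAt_zak f p).continuousAt
  | succ N ih =>
    refine fun f => contDiff_succ_iff_hasFDerivAt.2 ⟨_, ?_, hasFDerivAt_zak f⟩
    exact ofPartials.contDiff.comp ((ih _).prodMk
      (((ih _).sub (contDiff_fst.smul (ih f))).const_smul (2 * Real.pi * Complex.I : ℂ)))

theorem integral_norm_sq_zak (f : 𝓢(ℝ, ℂ)) {n : ℤ} (hn : n ≠ 0) :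
    ∫ x in (0 : ℝ)..1, ∫ y in (0 : ℝ)..1, ‖zak f (x, n * y)‖ ^ 2 = ∫ x, ‖f x‖ ^ 2 := by
  have hparseval (x : ℝ) :
      ∫ y in (0 : ℝ)..1, ‖zak f (x, n * y)‖ ^ 2 = ∑' ξ : ℤ, ‖f (x + ξ)‖ ^ 2 := by
    have hzak (y : ℝ) :
        zak f (x, n * y) = ∑' ξ : ℤ, f (x + ξ) * fourier (ξ * n) (y : UnitAddCircle) :=
      tsum_congr fun ξ => by
        rw [zakTerm, Circle.smul_def, smul_eq_mul, mul_comm, ← mul_assoc, ← Int.cast_mul,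
          fourierChar_intCast_mul]
    rw [← integral_norm_sq_tsum_fourier (T := 1) (mul_left_injective₀ hn)
      (summable_norm_comp_add_int f x).of_norm, AddCircle.integral_haarAddCircle,
      ← UnitAddCircle.intervalIntegral_preimage 0]
    simp [hzak]
  simp only [hparseval]
  exact integral_tsum_comp_add_int ((f.memLp 2).integrable_norm_pow two_ne_zero)

end Zak

section WeilBrezin

open scoped FourierTransform SchwartzMap

variable (f : 𝓢(ℝ, ℂ)) (k m n : ℤ)

/-- The Weil–Brezin map `f ↦ F` with parameters `(k, m, n)`, sending Schwartz functions on `ℝ` to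
functions on `KT⁴`. -/
noncomputable def weilBrezin : F4 := fun t x y z => ∑' ξ : ℤ,
  f (x + (ξ : ℝ)) *
    Complex.exp (2 * (Real.pi : ℂ) * Complex.I *
      ((k : ℂ) * (t : ℂ) + ((m : ℂ) + (n : ℂ) * (ξ : ℂ)) * (y : ℂ) + (n : ℂ) * (z : ℂ)))

lemma mul_cexp_eq_smul_zakTerm (ξ : ℤ) (t x y z : ℝ) :
    f (x + (ξ : ℝ)) *
      Complex.exp (2 * (Real.pi : ℂ) * Complex.I *
        ((k : ℂ) * (t : ℂ) + ((m : ℂ) + (n : ℂ) * (ξ : ℂ)) * (y : ℂ) + (n : ℂ) * (z : ℂ))) =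
      𝐞 (k * t + m * y + n * z) • zakTerm f ξ (x, n * y) := by
  rw [zakTerm, smul_smul, ← AddChar.map_add_eq_mul, Circle.smul_def, Real.fourierChar_apply,
    smul_eq_mul, mul_comm]
  push_cast
  ring_nf

lemma weilBrezin_eq_smul_zak (t x y z : ℝ) :
    weilBrezin f k m n t x y z = 𝐞 (k * t + m * y + n * z) • zak f (x, n * y) := by
  simp only [weilBrezin, mul_cexp_eq_smul_zakTerm, tsum_const_smul', zak]

theorem smooth4_weilBrezin : Smooth4 (weilBrezin f k m n) := by
  simp only [Smooth4, weilBrezin_eq_smul_zak, Circle.smul_def]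
  exact (contDiff_fourierChar.comp (by fun_prop)).smul ((contDiff_zak f).comp (by fun_prop))

theorem ktPeriodic_weilBrezin : KTPeriodic (weilBrezin f k m n) := by
  intro t x y z
  simp only [weilBrezin_eq_smul_zak]
  refine ⟨?_, ?_, ?_, ?_⟩
  · rw [show (k * (t + 1) + m * y + n * z : ℝ) = k * t + m * y + n * z + k by ring,
      AddChar.map_add_eq_mul, fourierChar_intCast, mul_one]
  · rw [zak_add_one_left, smul_smul, ← AddChar.map_add_eq_mul]
    ring_nf
  · rw [show (k * t + m * (y + 1) + n * z : ℝ) = k * t + m * y + n * z + m by ring,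
      AddChar.map_add_eq_mul, fourierChar_intCast, mul_one, mul_add_one, zak_add_intCast_right]
  · rw [mul_add_one, ← add_assoc, AddChar.map_add_eq_mul, fourierChar_intCast, mul_one]

theorem integral_norm_sq_weilBrezin {n : ℤ} (hn : n ≠ 0) :
    ∫ t in (0 : ℝ)..1, ∫ x in (0 : ℝ)..1, ∫ y in (0 : ℝ)..1, ∫ z in (0 : ℝ)..1,
      ‖weilBrezin f k m n t x y z‖ ^ 2 = ∫ x, ‖f x‖ ^ 2 := by
  simp only [weilBrezin_eq_smul_zak, Circle.norm_smul, intervalIntegral.integral_const, sub_zero,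
    one_smul]
  exact integral_norm_sq_zak f hn

end WeilBrezin

/-- for Schwartz `f` and integers `k, m, n` with `n ≠ 0`, the Weil–Brezin
series `F(t,x,y,z) = Σ_{ξ∈ℤ} f(x+ξ)·e^{2πi(kt+(m+nξ)y+nz)}` converges absolutely at every
point, defines a smooth KT-periodic function, and satisfies
`∫_{[0,1]⁴} |F|² = ∫_ℝ |f|²`. -/
theorem weilBrezin_smooth_periodic_isometry
    (f : SchwartzMap ℝ ℂ) (k m n : ℤ) (hn : n ≠ 0) :
    (∀ t x y z : ℝ, Summable (fun ξ : ℤ =>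
      ‖f (x + (ξ : ℝ)) *
        Complex.exp (2 * (Real.pi : ℂ) * Complex.I *
          ((k : ℂ) * (t : ℂ) + ((m : ℂ) + (n : ℂ) * (ξ : ℂ)) * (y : ℂ) + (n : ℂ) * (z : ℂ)))‖)) ∧
    (let F : F4 := fun t x y z => ∑' ξ : ℤ,
        f (x + (ξ : ℝ)) *
          Complex.exp (2 * (Real.pi : ℂ) * Complex.I *
            ((k : ℂ) * (t : ℂ) + ((m : ℂ) + (n : ℂ) * (ξ : ℂ)) * (y : ℂ) + (n : ℂ) * (z : ℂ)))
     Smooth4 F ∧ KTPeriodic F ∧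
     (∫ t in (0:ℝ)..1, ∫ x in (0:ℝ)..1, ∫ y in (0:ℝ)..1, ∫ z in (0:ℝ)..1,
        ‖F t x y z‖ ^ 2) = ∫ x : ℝ, ‖f x‖ ^ 2) := by
  refine ⟨fun t x y z => ?_, smooth4_weilBrezin f k m n, ktPeriodic_weilBrezin f k m n,
    integral_norm_sq_weilBrezin f k m hn⟩
  simpa only [mul_cexp_eq_smul_zakTerm, Circle.norm_smul, norm_zakTerm] using
    summable_norm_comp_add_int f x
end

section
/- Let p₀, p₁, p₂, q₀, q₁, q₂ ∈ ℂ and set P(s) = p₂s² + p₁s + p₀ and Q(s) = q₂s² + q₁s + q₀. Let c ∈ ℂ, r > 0, and let φ be a holomorphic function on an open set U ⊆ ℂ containing the circle {s : |s − c| = r}, satisfying (P·φ)′(s) = Q(s)·φ(s) on U. Then the function h : ℝ → ℂ defined by the contour integral h(x) = ∮_{|s−c|=r} φ(s)·e^{sx} ds satisfies the second-order ODE (p₂x + q₂)·h″(x) + (p₁x + q₁)·h′(x) + (p₀x + q₀)·h(x) = 0 for every x ∈ ℝ. -/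
/-!
Differentiating `∮ φ(s) e^{sx} ds` in `x` multiplies the density `φ` by `s`, so the left side of the
equation is `∮ (x P(s) + Q(s)) φ(s) e^{sx} ds`. As `(Pφ)′ = Qφ`, this integrand is the
`s`-derivative of `P(s) φ(s) e^{sx}`, which is single-valued on the circle, so the integral
vanishes.
-/

open Complex

noncomputable section

section CircleLaplace

open Metric

variable {𝕜 : Type*} [RCLike 𝕜] [NormedAlgebra 𝕜 ℂ] {c : ℂ} {R : ℝ} {φ : ℂ → ℂ}

theorem hasDerivAt_circleIntegral_mul {K K' : 𝕜 → ℂ → ℂ} (hφ : CircleIntegrable φ c R)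
    (hK : ∀ x, ContinuousOn (K x) (sphere c |R|))
    (hK' : ContinuousOn (Function.uncurry K') (Set.univ ×ˢ sphere c |R|))
    (hderiv : ∀ x, ∀ s ∈ sphere c |R|, HasDerivAt (fun y => K y s) (K' x s) x) (x : 𝕜) :
    HasDerivAt (fun y => ∮ s in C(c, R), φ s * K y s) (∮ s in C(c, R), φ s * K' x s) x := by
  have mem_sphere (θ : ℝ) : circleMap c R θ ∈ sphere c |R| := circleMap_mem_sphere' c R θ
  have hK'x : ContinuousOn (K' x) (sphere c |R|) :=
    hK'.comp (f := fun s => (x, s)) (by fun_prop) fun s hs => ⟨Set.mem_univ x, hs⟩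
  obtain ⟨M, hM⟩ : ∃ M, ∀ p ∈ closedBall x 1 ×ˢ sphere c |R|, ‖Function.uncurry K' p‖ ≤ M :=
    ((isCompact_closedBall x 1).prod (isCompact_sphere c |R|)).exists_bound_of_continuousOn
      (hK'.mono (Set.prod_mono_left (Set.subset_univ _)))
  have integrable_K (y : 𝕜) := (hφ.mul_continuousOn (hK y)).out
  have integrable_K' := (hφ.mul_continuousOn hK'x).out
  refine (intervalIntegral.hasDerivAt_integral_of_dominated_loc_of_deriv_le
    (F' := fun y θ => deriv (circleMap c R) θ • (φ (circleMap c R θ) * K' y (circleMap c R θ)))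
    (bound := fun θ => ‖deriv (circleMap c R) θ • φ (circleMap c R θ)‖ * M)
    (closedBall_mem_nhds x one_pos) (.of_forall fun y => (integrable_K y).def'.aestronglyMeasurable)
    (integrable_K x) integrable_K'.def'.aestronglyMeasurable ?_ (hφ.out.norm.mul_const M) ?_).2
  · refine .of_forall fun θ _ y hy => ?_
    rw [← smul_mul_assoc, norm_mul]
    gcongr
    exact hM (y, circleMap c R θ) ⟨hy, mem_sphere θ⟩
  · exact .of_forall fun θ _ y _ =>
      ((hderiv y _ (mem_sphere θ)).const_mul (φ (circleMap c R θ))).const_mul _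

/-- The Laplace transform of the density `φ` along the circle of centre `c` and radius `R`, with the
sign convention `e^{sx}`. The variable `x` ranges over `𝕜 = ℝ` or `𝕜 = ℂ`, so that derivatives of
the transform are real or complex ones accordingly. -/
def circleLaplace (φ : ℂ → ℂ) (c : ℂ) (R : ℝ) (x : 𝕜) : ℂ :=
  ∮ s in C(c, R), φ s * exp (s * algebraMap 𝕜 ℂ x)

theorem circleIntegrable_mul_exp (hφ : CircleIntegrable φ c R) (z : ℂ) :
    CircleIntegrable (fun s => φ s * exp (s * z)) c R :=
  hφ.mul_continuousOn (by fun_prop)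

theorem hasDerivAt_circleLaplace (hφ : CircleIntegrable φ c R) (x : 𝕜) :
    HasDerivAt (circleLaplace φ c R) (circleLaplace (fun s => s * φ s) c R x) x := by
  have hexp (y : 𝕜) (s : ℂ) : HasDerivAt (fun y : 𝕜 => exp (s * algebraMap 𝕜 ℂ y))
      (exp (s * algebraMap 𝕜 ℂ y) * s) y := by
    simpa using ((algebraMapCLM 𝕜 ℂ).hasDerivAt.const_mul s).cexp
  have h := hasDerivAt_circleIntegral_mul hφ
    (K := fun y s => exp (s * algebraMap 𝕜 ℂ y)) (K' := fun y s => exp (s * algebraMap 𝕜 ℂ y) * s)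
    (fun y => by fun_prop) (by fun_prop) (fun y s _ => hexp y s) x
  refine h.congr_deriv (congrArg (circleIntegral · c R) ?_)
  ext s
  ring

theorem iteratedDeriv_circleLaplace (hφ : CircleIntegrable φ c R) (n : ℕ) :
    iteratedDeriv n (circleLaplace φ c R : 𝕜 → ℂ) = circleLaplace (fun s => s ^ n * φ s) c R := by
  induction n with
  | zero => simp
  | succ n ih =>
    have hn : CircleIntegrable (fun s => s ^ n * φ s) c R :=
      hφ.continuousOn_mul (by fun_prop)
    ext x
    rw [iteratedDeriv_succ, ih, (hasDerivAt_circleLaplace hn x).deriv]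
    simp only [pow_succ', mul_assoc]

theorem sum_mul_iteratedDeriv_circleLaplace (hφ : CircleIntegrable φ c R) {N : ℕ} (a : Fin N → ℂ)
    (x : 𝕜) :
    ∑ n, a n * iteratedDeriv n (circleLaplace φ c R) x =
      circleLaplace (fun s => (∑ n, a n * s ^ (n : ℕ)) * φ s) c R x := by
  have hint (n : Fin N) :
      CircleIntegrable (fun s => a n * (s ^ (n : ℕ) * φ s * exp (s * algebraMap 𝕜 ℂ x))) c R :=
    (circleIntegrable_mul_exp (hφ.continuousOn_mul (by fun_prop)) _).const_fun_smul
  simp only [iteratedDeriv_circleLaplace hφ, circleLaplace, ← circleIntegral.integral_const_mul]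
  rw [← circleIntegral.integral_fun_sum fun n _ => hint n]
  simp only [Finset.sum_mul, mul_assoc]

-- Integration by parts: a closed contour has no boundary term.
theorem circleLaplace_of_hasDerivWithinAt {f f' : ℂ → ℂ} (hf' : CircleIntegrable f' c R)
    (hf : ∀ s ∈ sphere c |R|, HasDerivWithinAt f (f' s) (sphere c |R|) s) (x : 𝕜) :
    circleLaplace f' c R x = -(algebraMap 𝕜 ℂ x * circleLaplace f c R x) := by
  set z := algebraMap 𝕜 ℂ x
  have hfc : CircleIntegrable f c R :=
    ContinuousOn.circleIntegrable' fun s hs => (hf s hs).continuousWithinAt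
  have hparts : (∮ s in C(c, R), f' s * exp (s * z) + z • (f s * exp (s * z))) = 0 :=
    circleIntegral.integral_eq_zero_of_hasDerivWithinAt' fun s hs =>
      ((hf s hs).mul (hasDerivAt_mul_const z).cexp.hasDerivWithinAt).congr_deriv
        (by rw [smul_eq_mul]; ring)
  rw [circleIntegral.integral_add (circleIntegrable_mul_exp hf' z)
    (circleIntegrable_mul_exp hfc z).const_fun_smul,
    circleIntegral.integral_smul] at hparts
  exact eq_neg_of_add_eq_zero_left hparts

theorem contour_integral_solves_ode_general {N : ℕ} (p q : Fin N → ℂ)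
    (hφ : CircleIntegrable φ c R)
    (hpq : ∀ s ∈ sphere c |R|, HasDerivWithinAt (fun z => (∑ n, p n * z ^ (n : ℕ)) * φ z)
      ((∑ n, q n * s ^ (n : ℕ)) * φ s) (sphere c |R|) s) (x : 𝕜) :
    ∑ n, (p n * algebraMap 𝕜 ℂ x + q n) * iteratedDeriv n (circleLaplace φ c R) x = 0 := by
  set z := algebraMap 𝕜 ℂ x
  set h : 𝕜 → ℂ := circleLaplace φ c R
  have hQφ : CircleIntegrable (fun s => (∑ n, q n * s ^ (n : ℕ)) * φ s) c R :=
    hφ.continuousOn_mul (by fun_prop)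
  calc ∑ n, (p n * z + q n) * iteratedDeriv n h x
    _ = z * ∑ n, p n * iteratedDeriv n h x + ∑ n, q n * iteratedDeriv n h x := by
      rw [Finset.mul_sum, ← Finset.sum_add_distrib]
      exact Finset.sum_congr rfl fun n _ => by ring
    _ = 0 := by
      rw [sum_mul_iteratedDeriv_circleLaplace hφ, sum_mul_iteratedDeriv_circleLaplace hφ,
        circleLaplace_of_hasDerivWithinAt hQφ hpq, add_neg_cancel]

end CircleLaplace

/-- Laplace integral transform method: if `φ` is holomorphic on an open
set containing the circle `|s − c| = r` and satisfies `(P·φ)′ = Q·φ` there, where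
`P(s) = p₂s² + p₁s + p₀` and `Q(s) = q₂s² + q₁s + q₀`, then
`h(x) = ∮_{|s−c|=r} φ(s)e^{sx} ds` solves
`(p₂x + q₂)h″ + (p₁x + q₁)h′ + (p₀x + q₀)h = 0` on `ℝ`. -/
theorem contour_integral_solves_ode
    (p₀ p₁ p₂ q₀ q₁ q₂ : ℂ) (c : ℂ) (r : ℝ) (hr : 0 < r)
    (U : Set ℂ) (hU : IsOpen U) (hsub : Metric.sphere c r ⊆ U)
    (φ : ℂ → ℂ) (hφ : DifferentiableOn ℂ φ U)
    (hPQ : ∀ s ∈ U,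
      HasDerivAt (fun z => (p₂ * z ^ 2 + p₁ * z + p₀) * φ z)
        ((q₂ * s ^ 2 + q₁ * s + q₀) * φ s) s) :
    let h : ℝ → ℂ := fun x => ∮ s in C(c, r), φ s * Complex.exp (s * (x : ℂ))
    ∀ x : ℝ,
      (p₂ * (x : ℂ) + q₂) * deriv (deriv h) x +
        (p₁ * (x : ℂ) + q₁) * deriv h x +
        (p₀ * (x : ℂ) + q₀) * h x = 0 := by
  intro h x
  have hφr : CircleIntegrable φ c r := (hφ.continuousOn.mono hsub).circleIntegrable hr.le
  have hode := contour_integral_solves_ode_general ![p₀, p₁, p₂] ![q₀, q₁, q₂] hφr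
    (fun s hs => by
      rw [abs_of_pos hr] at hs
      simpa [Fin.sum_univ_three, add_assoc, add_comm, add_left_comm] using
        (hPQ s (hsub hs)).hasDerivWithinAt) x
  have h_eq : h = circleLaplace φ c r := rfl
  simpa [h_eq, Fin.sum_univ_three, iteratedDeriv_succ, add_assoc, add_comm, add_left_comm]
    using hode

end
end

section
/- Let b ∈ ℝ. The ℂ-vector space of smooth functions f : ℝ² → ℂ, doubly periodic (f(t+1,x) = f(t,x) = f(t,x+1)), satisfying ∂f/∂t + i·∂f/∂x + (b/2)·f = 0 at every point, has dimension 1 if b ∈ 4πℤ and dimension 0 otherwise. Moreover, when b = 4πl with l ∈ ℤ, the solutions are exactly the functions f(t,x) = C·e^{2πi l x} with C ∈ ℂ. -/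
/-!
Write `c = 2π(η - iξ)` with `ξ`, `η` real. The unimodular plane wave `e^{2πi(ξt + ηx)}` is killed by
`∂/∂t + i ∂/∂x + c`, so dividing a doubly periodic solution by it leaves a bounded function killed
by `∂/∂t + i ∂/∂x`, that is, a bounded entire function of `t + ix`. By Liouville's theorem every
solution is a multiple of the plane wave, and a nonzero multiple is doubly periodic only when `ξ`
and `η` are integers. For `c = b/2` real this means `ξ = 0` and `b = 4πη`.
-/

open Complex

noncomputable section

/-- The space of smooth doubly periodic functions `f : ℝ² → ℂ` satisfying
`∂f/∂t + i·∂f/∂x + (b/2)·f = 0`. -/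
def Sol2D (b : ℝ) : Set (ℝ → ℝ → ℂ) :=
  {f | ContDiff ℝ (⊤ : ℕ∞) (fun p : ℝ × ℝ => f p.1 p.2) ∧
    (∀ t x : ℝ, f (t + 1) x = f t x ∧ f t (x + 1) = f t x) ∧
    (∀ t x : ℝ,
      deriv (fun s => f s x) t + Complex.I * deriv (fun s => f t s) x +
        ((b : ℂ) / 2) * f t x = 0)}

open scoped Real Interval

open Bornology Function Module Set

theorem hasDimOver_finrank {V : Type*} [AddCommGroup V] [Module ℂ V] (W : Submodule ℂ V)
    [FiniteDimensional ℂ W] : HasDimOver (W : Set V) (finrank ℂ W) := by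
  let e := finBasis ℂ W
  refine ⟨W.subtype ∘ e, e.linearIndependent.map' W.subtype W.ker_subtype, ?_⟩
  rw [range_comp, Submodule.span_image, e.span_eq, Submodule.map_subtype_top]

theorem isCompact_range_uncurry_of_periodic {X : Type*} [TopologicalSpace X] {f : ℝ → ℝ → X}
    {a b : ℝ} (ha : a ≠ 0) (hb : b ≠ 0) (hf : Continuous (uncurry f)) (hfa : Periodic f a)
    (hfb : ∀ t, Periodic (f t) b) : IsCompact (range (uncurry f)) := by
  have hrange : range (uncurry f) = uncurry f '' ([[0, 0 + a]] ×ˢ [[0, 0 + b]]) := by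
    refine Subset.antisymm ?_ (image_subset_range _ _)
    rintro _ ⟨⟨t, x⟩, rfl⟩
    obtain ⟨t', ht', hft⟩ := (hfa.image_uIcc ha 0).ge (mem_range_self t)
    obtain ⟨x', hx', hfx⟩ := ((hfb t').image_uIcc hb 0).ge (mem_range_self x)
    exact ⟨(t', x'), ⟨ht', hx'⟩, hfx.trans (congrFun hft x)⟩
  rw [hrange]
  exact (isCompact_uIcc.prod isCompact_uIcc).image hf

section CauchyRiemann

variable {E : Type*} [NormedAddCommGroup E] [NormedSpace ℂ E] {f : ℝ → ℝ → E} {t x : ℝ}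

/-- The Cauchy–Riemann operator `∂/∂t + i ∂/∂x` on functions of two real variables, which is twice
the vector field `V̄₁`. -/
def cauchyRiemann (f : ℝ → ℝ → E) (t x : ℝ) : E :=
  deriv (fun s => f s x) t + I • deriv (fun s => f t s) x

theorem cauchyRiemann_eq_fderiv (hf : DifferentiableAt ℝ (uncurry f) (t, x)) :
    cauchyRiemann f t x =
      fderiv ℝ (uncurry f) (t, x) (1, 0) + I • fderiv ℝ (uncurry f) (t, x) (0, 1) := by
  have ht : HasDerivAt (fun s => f s x) (fderiv ℝ (uncurry f) (t, x) (1, 0)) t :=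
    hf.hasFDerivAt.comp_hasDerivAt (f := fun s => (s, x)) t
      ((hasDerivAt_id t).prodMk (hasDerivAt_const t x))
  have hx : HasDerivAt (fun s => f t s) (fderiv ℝ (uncurry f) (t, x) (0, 1)) x :=
    hf.hasFDerivAt.comp_hasDerivAt (f := fun s => (t, s)) x
      ((hasDerivAt_const x t).prodMk (hasDerivAt_id x))
  rw [cauchyRiemann, ht.deriv, hx.deriv]

theorem cauchyRiemann_smul {g : ℝ → ℝ → ℂ} (hg : DifferentiableAt ℝ (uncurry g) (t, x))
    (hf : DifferentiableAt ℝ (uncurry f) (t, x)) :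
    cauchyRiemann (fun t x => g t x • f t x) t x =
      g t x • cauchyRiemann f t x + cauchyRiemann g t x • f t x := by
  have hgf : HasFDerivAt (uncurry fun t x => g t x • f t x) _ (t, x) :=
    hg.hasFDerivAt.smul hf.hasFDerivAt
  rw [cauchyRiemann_eq_fderiv hgf.differentiableAt, cauchyRiemann_eq_fderiv hf,
    cauchyRiemann_eq_fderiv hg, hgf.fderiv]
  simp only [add_apply, smul_apply, ContinuousLinearMap.smulRight_apply, uncurry_apply_pair,
    smul_eq_mul]
  module

theorem cauchyRiemann_const_smul (C : ℂ) (f : ℝ → ℝ → E) (t x : ℝ) :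
    cauchyRiemann (C • f) t x = C • cauchyRiemann f t x := by
  simp only [cauchyRiemann, Pi.smul_apply, deriv_fun_const_smul_field, smul_add, smul_comm I C]

theorem differentiable_complex_of_cauchyRiemann_eq_zero (hf : Differentiable ℝ (uncurry f))
    (hcr : ∀ t x, cauchyRiemann f t x = 0) : Differentiable ℂ fun z : ℂ => f z.re z.im := by
  intro z
  have hz : HasFDerivAt (fun z : ℂ => f z.re z.im)
      ((fderiv ℝ (uncurry f) (z.re, z.im)).comp (reCLM.prod imCLM)) z :=
    (hf (z.re, z.im)).hasFDerivAt.comp (f := fun z : ℂ => (z.re, z.im)) z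
      (reCLM.prod imCLM).hasFDerivAt
  have hcrz := hcr z.re z.im
  rw [cauchyRiemann_eq_fderiv (hf _)] at hcrz
  refine differentiableAt_complex_iff_differentiableAt_real.2 ⟨hz.differentiableAt, ?_⟩
  simp only [hz.fderiv, ContinuousLinearMap.comp_apply, ContinuousLinearMap.prod_apply, reCLM_apply,
    imCLM_apply, I_re, I_im, one_re, one_im]
  rw [eq_neg_of_add_eq_zero_left hcrz, smul_neg, smul_smul, I_mul_I, neg_smul, one_smul, neg_neg]

theorem exists_eq_const_of_cauchyRiemann_eq_zero (hf : Differentiable ℝ (uncurry f))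
    (hbdd : IsBounded (range (uncurry f))) (hcr : ∀ t x, cauchyRiemann f t x = 0) :
    ∃ v, ∀ t x, f t x = v := by
  have hrange : range (fun z : ℂ => f z.re z.im) ⊆ range (uncurry f) :=
    range_subset_iff.2 fun z => mem_range_self (z.re, z.im)
  obtain ⟨v, hv⟩ := (differentiable_complex_of_cauchyRiemann_eq_zero hf
    hcr).exists_const_forall_eq_of_bounded (hbdd.subset hrange)
  exact ⟨v, fun t x => hv ⟨t, x⟩⟩

end CauchyRiemann

/-- The plane wave on `ℝ²` with frequencies `ξ` in `t` and `η` in `x`, normalised so that integer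
frequencies give the characters of the torus `ℝ² / ℤ²`. -/
def planeWave (ξ η t x : ℝ) : ℂ :=
  exp (2 * π * I * ξ * t + 2 * π * I * η * x)

section PlaneWave

variable (ξ η t x : ℝ)

theorem contDiff_planeWave (n : WithTop ℕ∞) : ContDiff ℝ n (uncurry (planeWave ξ η)) := by
  have ht : ContDiff ℝ n fun p : ℝ × ℝ => (p.1 : ℂ) := ofRealCLM.contDiff.comp contDiff_fst
  have hx : ContDiff ℝ n fun p : ℝ × ℝ => (p.2 : ℂ) := ofRealCLM.contDiff.comp contDiff_snd
  exact ((contDiff_const.mul ht).add (contDiff_const.mul hx)).cexp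

theorem differentiable_planeWave : Differentiable ℝ (uncurry (planeWave ξ η)) :=
  (contDiff_planeWave ξ η 1).differentiable one_ne_zero

theorem planeWave_apply_ne_zero : planeWave ξ η t x ≠ 0 :=
  exp_ne_zero _

theorem planeWave_ne_zero : planeWave ξ η ≠ 0 := fun h =>
  planeWave_apply_ne_zero ξ η 0 0 (congrFun₂ h 0 0)

theorem norm_planeWave : ‖planeWave ξ η t x‖ = 1 := by
  simp [planeWave, norm_exp]

theorem planeWave_mul_planeWave_neg : planeWave ξ η t x * planeWave (-ξ) (-η) t x = 1 := by
  rw [planeWave, planeWave, ← exp_add, exp_eq_one_iff]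
  exact ⟨0, by push_cast; ring⟩

theorem cauchyRiemann_planeWave :
    cauchyRiemann (planeWave ξ η) t x = -(2 * π * (η - ξ * I)) * planeWave ξ η t x := by
  have ht : HasDerivAt (fun s => planeWave ξ η s x) (planeWave ξ η t x * (2 * π * I * ξ)) t := by
    simpa [planeWave] using
      (((hasDerivAt_id t).ofReal_comp.const_mul (2 * π * I * ξ)).add_const (2 * π * I * η * x)).cexp
  have hx : HasDerivAt (fun s => planeWave ξ η t s) (planeWave ξ η t x * (2 * π * I * η)) x := by
    simpa [planeWave] using
      (((hasDerivAt_id x).ofReal_comp.const_mul (2 * π * I * η)).const_add (2 * π * I * ξ * t)).cexp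
  rw [cauchyRiemann, ht.deriv, hx.deriv, smul_eq_mul]
  linear_combination 2 * π * η * planeWave ξ η t x * I_sq

theorem planeWave_add_one_left :
    planeWave ξ η (t + 1) x = exp (2 * π * I * ξ) * planeWave ξ η t x := by
  rw [planeWave, planeWave, ← exp_add]
  push_cast
  ring_nf

theorem planeWave_add_one_right :
    planeWave ξ η t (x + 1) = exp (2 * π * I * η) * planeWave ξ η t x := by
  rw [planeWave, planeWave, ← exp_add]
  push_cast
  ring_nf

theorem exp_two_pi_I_mul_ofReal_eq_one_iff (r : ℝ) :
    exp (2 * π * I * r) = 1 ↔ ∃ n : ℤ, r = n := by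
  rw [exp_eq_one_iff]
  refine exists_congr fun n => ?_
  rw [mul_comm (n : ℂ), mul_right_inj' two_pi_I_ne_zero]
  norm_cast

theorem planeWave_doubly_periodic_iff :
    (∀ t x, planeWave ξ η (t + 1) x = planeWave ξ η t x ∧
      planeWave ξ η t (x + 1) = planeWave ξ η t x) ↔
      (∃ m : ℤ, ξ = m) ∧ ∃ l : ℤ, η = l := by
  simp only [planeWave_add_one_left, planeWave_add_one_right,
    mul_eq_right₀ (planeWave_apply_ne_zero ξ η _ _), exp_two_pi_I_mul_ofReal_eq_one_iff,
    forall_const]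

variable {ξ η}

theorem exists_eq_planeWave_smul_of_isBounded {E : Type*} [NormedAddCommGroup E] [NormedSpace ℂ E]
    {f : ℝ → ℝ → E} (hf : Differentiable ℝ (uncurry f)) (hbdd : IsBounded (range (uncurry f)))
    (hcr : ∀ t x, cauchyRiemann f t x + (2 * π * (η - ξ * I) : ℂ) • f t x = 0) :
    ∃ v, ∀ t x, f t x = planeWave ξ η t x • v := by
  let g : ℝ → ℝ → E := fun t x => planeWave (-ξ) (-η) t x • f t x
  have hwave := differentiable_planeWave (-ξ) (-η)
  have hg : Differentiable ℝ (uncurry g) := hwave.smul hf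
  have hg_bdd : IsBounded (range (uncurry g)) := by
    obtain ⟨M, hM⟩ := isBounded_iff_forall_norm_le.1 hbdd
    refine isBounded_iff_forall_norm_le.2 ⟨M, forall_mem_range.2 fun p => ?_⟩
    have hnorm : ‖uncurry g p‖ = ‖uncurry f p‖ := by
      simp only [g, uncurry, norm_smul, norm_planeWave, one_mul]
    exact hnorm.trans_le (hM _ (mem_range_self p))
  have hg_cr (t x : ℝ) : cauchyRiemann g t x = 0 := calc
    cauchyRiemann g t x = planeWave (-ξ) (-η) t x •
        (cauchyRiemann f t x + (2 * π * (η - ξ * I) : ℂ) • f t x) := by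
      rw [cauchyRiemann_smul (hwave _) (hf _), cauchyRiemann_planeWave]
      push_cast
      module
    _ = 0 := by rw [hcr, smul_zero]
  obtain ⟨v, hv⟩ := exists_eq_const_of_cauchyRiemann_eq_zero hg hg_bdd hg_cr
  refine ⟨v, fun t x => ?_⟩
  rw [← hv t x, smul_smul, planeWave_mul_planeWave_neg, one_smul]

end PlaneWave

/-- The doubly periodic `C^n` functions `f : ℝ² → ℂ` with `∂f/∂t + i ∂f/∂x + c f = 0`, for an
arbitrary complex constant `c`; the case `n = ∞`, `c = b / 2` is `Sol2D b`. -/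
def torusSolutions (n : WithTop ℕ∞) (c : ℂ) : Set (ℝ → ℝ → ℂ) :=
  {f | ContDiff ℝ n (uncurry f) ∧
    (∀ t x, f (t + 1) x = f t x ∧ f t (x + 1) = f t x) ∧
    ∀ t x, cauchyRiemann f t x + c * f t x = 0}

section TorusSolutions

variable {n : WithTop ℕ∞} {c : ℂ}

theorem exists_eq_smul_planeWave_of_mem_torusSolutions {ξ η : ℝ} {f : ℝ → ℝ → ℂ} (hn : n ≠ 0)
    (hf : f ∈ torusSolutions n (2 * π * (η - ξ * I))) : ∃ C : ℂ, f = C • planeWave ξ η := by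
  obtain ⟨hsmooth, hper, hcr⟩ := hf
  have hbdd : IsBounded (range (uncurry f)) :=
    (isCompact_range_uncurry_of_periodic one_ne_zero one_ne_zero hsmooth.continuous
      (fun t => funext fun x => (hper t x).1) fun t x => (hper t x).2).isBounded
  obtain ⟨C, hC⟩ := exists_eq_planeWave_smul_of_isBounded (hsmooth.differentiable hn) hbdd hcr
  exact ⟨C, funext₂ fun t x => (hC t x).trans (mul_comm _ _)⟩

theorem zero_mem_torusSolutions : 0 ∈ torusSolutions n c :=
  ⟨contDiff_const, fun _ _ => ⟨rfl, rfl⟩, fun _ _ => by simp [cauchyRiemann]⟩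

theorem smul_planeWave_mem_torusSolutions (m l : ℤ) (C : ℂ) :
    C • planeWave m l ∈ torusSolutions n (2 * π * (l - m * I)) := by
  refine ⟨contDiff_const.mul (contDiff_planeWave m l n), fun t x => ?_, fun t x => ?_⟩
  · obtain ⟨ht, hx⟩ := (planeWave_doubly_periodic_iff m l).2 ⟨⟨m, rfl⟩, l, rfl⟩ t x
    exact ⟨congrArg (C * ·) ht, congrArg (C * ·) hx⟩
  · rw [cauchyRiemann_const_smul, cauchyRiemann_planeWave]
    simp only [Pi.smul_apply, smul_eq_mul, ofReal_intCast]
    ring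

theorem torusSolutions_eq_span (hn : n ≠ 0) (m l : ℤ) :
    torusSolutions n (2 * π * (l - m * I)) = Submodule.span ℂ {planeWave m l} := by
  ext f
  rw [SetLike.mem_coe, Submodule.mem_span_singleton]
  constructor
  · intro hf
    obtain ⟨C, rfl⟩ := exists_eq_smul_planeWave_of_mem_torusSolutions (ξ := m) (η := l) hn
      (by simpa using hf)
    exact ⟨C, rfl⟩
  · rintro ⟨C, rfl⟩
    exact smul_planeWave_mem_torusSolutions m l C

theorem torusSolutions_eq_bot (hn : n ≠ 0) (hc : ¬∃ l m : ℤ, c = 2 * π * (l - m * I)) :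
    torusSolutions n c = (⊥ : Submodule ℂ (ℝ → ℝ → ℂ)) := by
  obtain ⟨ξ, η, rfl⟩ : ∃ ξ η : ℝ, c = 2 * π * (η - ξ * I) := by
    refine ⟨-(c / (2 * π)).im, (c / (2 * π)).re, ?_⟩
    have htwo_pi : (2 * π : ℂ) ≠ 0 := by simp [Real.pi_ne_zero]
    rw [ofReal_neg, neg_mul, sub_neg_eq_add, re_add_im, mul_div_cancel₀ _ htwo_pi]
  refine Subset.antisymm (fun f hf => ?_) (singleton_subset_iff.2 zero_mem_torusSolutions)
  obtain ⟨C, rfl⟩ := exists_eq_smul_planeWave_of_mem_torusSolutions hn hf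
  suffices hC : C = 0 by simp [hC]
  by_contra hC
  have hper : ∀ t x, planeWave ξ η (t + 1) x = planeWave ξ η t x ∧
      planeWave ξ η t (x + 1) = planeWave ξ η t x := fun t x =>
    (hf.2.1 t x).imp (mul_left_cancel₀ hC) (mul_left_cancel₀ hC)
  obtain ⟨⟨m, rfl⟩, l, rfl⟩ := (planeWave_doubly_periodic_iff ξ η).1 hper
  exact hc ⟨l, m, by simp⟩

end TorusSolutions

theorem solutions_on_base_torus_general {n : WithTop ℕ∞} (hn : n ≠ 0) (c : ℂ) :
    ((∃ l m : ℤ, c = 2 * π * (l - m * I)) → HasDimOver (torusSolutions n c) 1) ∧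
    (¬(∃ l m : ℤ, c = 2 * π * (l - m * I)) → HasDimOver (torusSolutions n c) 0) ∧
    (∀ l m : ℤ, c = 2 * π * (l - m * I) →
      torusSolutions n c = {f | ∃ C : ℂ, f = fun t x => C * planeWave m l t x}) := by
  refine ⟨?_, fun hc => ?_, ?_⟩
  · rintro ⟨l, m, rfl⟩
    rw [torusSolutions_eq_span hn, ← finrank_span_singleton (K := ℂ) (planeWave_ne_zero m l)]
    exact hasDimOver_finrank _
  · rw [torusSolutions_eq_bot hn hc, ← finrank_bot ℂ (ℝ → ℝ → ℂ)]
    exact hasDimOver_finrank _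
  · rintro l m rfl
    rw [torusSolutions_eq_span hn]
    ext f
    exact Submodule.mem_span_singleton.trans (exists_congr fun C => eq_comm)

theorem half_eq_two_pi_mul_iff {b : ℝ} {m l : ℤ} :
    (b / 2 : ℂ) = 2 * π * (l - m * I) ↔ m = 0 ∧ b = 4 * π * l := by
  have hre : b / 2 = 2 * π * l ↔ b = 4 * π * l := by
    constructor <;> intro h <;> linarith
  simp [Complex.ext_iff, Real.pi_ne_zero, and_comm, hre]

/-- the space of smooth doubly periodic solutions of
`∂f/∂t + i∂f/∂x + (b/2)f = 0` has dimension `1` if `b ∈ 4πℤ`, and `0` otherwise; when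
`b = 4πl`, `l ∈ ℤ`, the solutions are exactly the functions `C·e^{2πilx}`. -/
theorem solutions_on_base_torus (b : ℝ) :
    ((∃ l : ℤ, b = 4 * Real.pi * (l : ℝ)) → HasDimOver (Sol2D b) 1) ∧
    (¬ (∃ l : ℤ, b = 4 * Real.pi * (l : ℝ)) → HasDimOver (Sol2D b) 0) ∧
    (∀ l : ℤ, b = 4 * Real.pi * (l : ℝ) →
      Sol2D b = {f | ∃ C : ℂ, f = fun (_t x : ℝ) =>
        C * Complex.exp (2 * (Real.pi : ℂ) * Complex.I * (l : ℂ) * (x : ℂ))}) := by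
  have hSol : Sol2D b = torusSolutions (⊤ : ℕ∞) (b / 2) := rfl
  simpa [hSol, half_eq_two_pi_mul_iff, planeWave] using
    solutions_on_base_torus_general (n := (⊤ : ℕ∞)) (by simp) (b / 2)

end
end
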